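/- If M is an R-module, and 0 → M → G^0 → ⋯ → G^{n−1} → V^n → 0 and 0 → M → Ḡ^0 → ⋯ → Ḡ^{n−1} → V̄^n → 0 are exact sequences with all G^i and Ḡ^i Gorenstein weak injective, then V^n is Gorenstein weak injective if and only if V̄^n is. -/

import Mathlib

open CategoryTheory

universe u

noncomputable section

variable (R : Type u) [Ring R]

/-- Vanishing of `Ext^n_R(N, M)` for left `R`-modules, expressed via the `Ext` bifunctor
on the `ℤ`-linear abelian category `ModuleCat R`. -/
def ExtVanish (n : ℕ) (N M : ModuleCat.{u} R) : Prop :=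
  Subsingleton (((_root_.Ext ℤ (ModuleCat.{u} R) n).obj (Opposite.op N)).obj M)

/-- An `R`-module is super finitely presented if it admits a resolution by
finitely generated projective modules. -/
def SuperFinitelyPresented (N : ModuleCat.{u} R) : Prop :=
  ∃ (F : ℕ → ModuleCat.{u} R) (d : ∀ n, F (n + 1) →ₗ[R] F n) (ε : F 0 →ₗ[R] N),
    (∀ n, Module.Finite R (F n)) ∧ (∀ n, Module.Projective R (F n)) ∧
    Function.Surjective ε ∧ Function.Exact (d 0) ε ∧
    (∀ n, Function.Exact (d (n + 1)) (d n))

/-- An `R`-module `W` is weak injective if `Ext^1_R(N, W) = 0` for every super finitely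
presented module `N`. -/
def WeakInjective (W : ModuleCat.{u} R) : Prop :=
  ∀ N : ModuleCat.{u} R, SuperFinitelyPresented R N → ExtVanish R 1 N W

/-- `wid_R M ≤ n` : `Ext^{n+1}_R(N, M) = 0` for every super finitely presented `N`. -/
def WidLE (M : ModuleCat.{u} R) (n : ℕ) : Prop :=
  ∀ N : ModuleCat.{u} R, SuperFinitelyPresented R N → ExtVanish R (n + 1) N M

/-- The weak injective dimension, as an element of `ℕ∞`. -/
def Wid (M : ModuleCat.{u} R) : ℕ∞ :=
  sInf {c : ℕ∞ | ∃ n : ℕ, c = n ∧ WidLE R M n}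

/-- A doubly infinite exact complex of injective modules which stays exact after applying
`Hom_R(W, -)` for every module `W` in the test class `𝒯`. -/
def IsTotallyAcyclicInjComplex (𝒯 : ModuleCat.{u} R → Prop)
    (I : ℤ → ModuleCat.{u} R) (d : ∀ n : ℤ, I n →ₗ[R] I (n + 1)) : Prop :=
  (∀ n, Module.Injective R (I n)) ∧
  (∀ n, Function.Exact (d n) (d (n + 1))) ∧
  (∀ W : ModuleCat.{u} R, 𝒯 W → ∀ n,
    Function.Exact (fun g : W →ₗ[R] I n => (d n).comp g)
      (fun g : W →ₗ[R] I (n + 1) => (d (n + 1)).comp g))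

/-- `M` is Gorenstein injective relative to the test class `𝒯` : `M` is the cokernel
`Coker (I_1 → I_0)` of a `Hom(𝒯, -)`-exact exact complex of injective modules. -/
def GorensteinRelInjective (𝒯 : ModuleCat.{u} R → Prop) (M : ModuleCat.{u} R) : Prop :=
  ∃ (I : ℤ → ModuleCat.{u} R) (d : ∀ n : ℤ, I n →ₗ[R] I (n + 1)) (π : I 0 →ₗ[R] M),
    IsTotallyAcyclicInjComplex R 𝒯 I d ∧
    Function.Surjective π ∧ Function.Exact (d (-1)) π

/-- Gorenstein weak injective modules: the test class is that of weak injective modules. -/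
def GorensteinWeakInjective (M : ModuleCat.{u} R) : Prop :=
  GorensteinRelInjective R (WeakInjective R) M

/-- Gorenstein injective modules: the test class is that of injective modules. -/
def GorensteinInjective (M : ModuleCat.{u} R) : Prop :=
  GorensteinRelInjective R (fun E => Module.Injective R E) M

/-- The data of an exact sequence `0 → M → G^0 → ⋯ → G^n → 0` (the modules `G^i` for
`i > n` being trivial). -/
def IsFiniteCoresolution (M : ModuleCat.{u} R) (n : ℕ) (G : ℕ → ModuleCat.{u} R)
    (d : ∀ i, G i →ₗ[R] G (i + 1)) (ε : M →ₗ[R] G 0) : Prop :=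
  Function.Injective ε ∧ Function.Exact ε (d 0) ∧
  (∀ i, Function.Exact (d i) (d (i + 1))) ∧
  (∀ i, n < i → ∀ x : G i, x = 0)

/-- `Gwid_R M ≤ n` : `M` has a coresolution of length `n` by Gorenstein weak injective
modules. -/
def GwidLE (M : ModuleCat.{u} R) (n : ℕ) : Prop :=
  ∃ (G : ℕ → ModuleCat.{u} R) (d : ∀ i, G i →ₗ[R] G (i + 1)) (ε : M →ₗ[R] G 0),
    IsFiniteCoresolution R M n G d ε ∧ ∀ i, GorensteinWeakInjective R (G i)

/-- The Gorenstein weak injective dimension, as an element of `ℕ∞`. -/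
def Gwid (M : ModuleCat.{u} R) : ℕ∞ :=
  sInf {c : ℕ∞ | ∃ n : ℕ, c = n ∧ GwidLE R M n}

/-- `Gid_R M ≤ n`, via coresolutions by Gorenstein injective modules. -/
def GidLE (M : ModuleCat.{u} R) (n : ℕ) : Prop :=
  ∃ (G : ℕ → ModuleCat.{u} R) (d : ∀ i, G i →ₗ[R] G (i + 1)) (ε : M →ₗ[R] G 0),
    IsFiniteCoresolution R M n G d ε ∧ ∀ i, GorensteinInjective R (G i)

/-- The Gorenstein injective dimension, as an element of `ℕ∞`. -/
def Gid (M : ModuleCat.{u} R) : ℕ∞ :=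
  sInf {c : ℕ∞ | ∃ n : ℕ, c = n ∧ GidLE R M n}

/-- `id_R M ≤ n`, via coresolutions by injective modules. -/
def IdLE (M : ModuleCat.{u} R) (n : ℕ) : Prop :=
  ∃ (G : ℕ → ModuleCat.{u} R) (d : ∀ i, G i →ₗ[R] G (i + 1)) (ε : M →ₗ[R] G 0),
    IsFiniteCoresolution R M n G d ε ∧ ∀ i, Module.Injective R (G i)

/-- The injective dimension, as an element of `ℕ∞`. -/
def Idim (M : ModuleCat.{u} R) : ℕ∞ :=
  sInf {c : ℕ∞ | ∃ n : ℕ, c = n ∧ IdLE R M n}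

/-- The data of an exact sequence `0 → P_n → ⋯ → P_0 → M → 0`. -/
def IsFiniteResolution (M : ModuleCat.{u} R) (n : ℕ) (P : ℕ → ModuleCat.{u} R)
    (d : ∀ i, P (i + 1) →ₗ[R] P i) (ε : P 0 →ₗ[R] M) : Prop :=
  Function.Surjective ε ∧ Function.Exact (d 0) ε ∧
  (∀ i, Function.Exact (d (i + 1)) (d i)) ∧
  (∀ i, n < i → ∀ x : P i, x = 0)

/-- `pd_R M ≤ n`, via resolutions by projective modules. -/
def PdLE (M : ModuleCat.{u} R) (n : ℕ) : Prop :=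
  ∃ (P : ℕ → ModuleCat.{u} R) (d : ∀ i, P (i + 1) →ₗ[R] P i) (ε : P 0 →ₗ[R] M),
    IsFiniteResolution R M n P d ε ∧ ∀ i, Module.Projective R (P i)

end

variable (R : Type u) [Ring R]

/-- A short exact sequence `0 → L → M → N → 0` of `R`-modules. -/
def ShortExactSeq (L M N : ModuleCat.{u} R) (f : L →ₗ[R] M) (g : M →ₗ[R] N) : Prop :=
  Function.Injective f ∧ Function.Surjective g ∧ Function.Exact f g

/-- Exactness of `0 → Hom(C, X) → Hom(B, X) → Hom(A, X) → 0` induced by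
`0 → A → B → C → 0`. -/
def HomContraExact (X : ModuleCat.{u} R) {A B C : ModuleCat.{u} R}
    (f : A →ₗ[R] B) (g : B →ₗ[R] C) : Prop :=
  Function.Injective (fun h : C →ₗ[R] X => h.comp g) ∧
  Function.Exact (fun h : C →ₗ[R] X => h.comp g) (fun h : B →ₗ[R] X => h.comp f) ∧
  Function.Surjective (fun h : B →ₗ[R] X => h.comp f)

/-- A short exact sequence is `GWI`-copure exact if `Hom_R(-, X)` leaves it exact for
every Gorenstein weak injective module `X`. -/
def GWICopureExact {A B C : ModuleCat.{u} R} (f : A →ₗ[R] B) (g : B →ₗ[R] C) : Prop :=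
  ShortExactSeq R A B C f g ∧
  ∀ X : ModuleCat.{u} R, GorensteinWeakInjective R X → HomContraExact R X f g

/-- `M` is `GWI`-copure injective if `Hom_R(-, M)` is exact on every `GWI`-copure exact
sequence. -/
def GWICopureInjectiveMod (M : ModuleCat.{u} R) : Prop :=
  ∀ (A B C : ModuleCat.{u} R) (f : A →ₗ[R] B) (g : B →ₗ[R] C),
    GWICopureExact R f g → HomContraExact R M f g

/-- `φ : M → G` is a Gorenstein weak injective preenvelope of `M`. -/
def GWIPreenvelope (M G : ModuleCat.{u} R) (φ : M →ₗ[R] G) : Prop :=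
  GorensteinWeakInjective R G ∧
  ∀ G' : ModuleCat.{u} R, GorensteinWeakInjective R G' →
    ∀ f : M →ₗ[R] G', ∃ g : G →ₗ[R] G', g.comp φ = f

/-- A `WI`-pure Tate injective resolution of `M` : an injective resolution
`0 → M → E^0 → E^1 → ⋯`, a `WI`-pure exact complex `T` of injectives, and a chain map
`u : E → T` which is an isomorphism in all sufficiently large degrees. -/
def WIPureTateInjectiveResolution (M : ModuleCat.{u} R)
    (E : ℕ → ModuleCat.{u} R) (dE : ∀ n, E n →ₗ[R] E (n + 1)) (ε : M →ₗ[R] E 0)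
    (T : ℤ → ModuleCat.{u} R) (dT : ∀ n : ℤ, T n →ₗ[R] T (n + 1))
    (u : ∀ n : ℕ, E n →ₗ[R] T n) : Prop :=
  (∀ n, Module.Injective R (E n)) ∧ Function.Injective ε ∧
  Function.Exact ε (dE 0) ∧ (∀ n, Function.Exact (dE n) (dE (n + 1))) ∧
  IsTotallyAcyclicInjComplex R (WeakInjective R) T dT ∧
  (∀ n : ℕ, (dT n).comp (u n) = (u (n + 1)).comp (dE n)) ∧
  ∃ N : ℕ, ∀ n, N ≤ n → Function.Bijective (u n)

/-- Vanishing of the relative Tate cohomology `Êxt^i_GWI(N, M)` for all `i ∈ ℤ`,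
computed from the `WI`-pure exact complex `T` : the complex `Hom_R(N, T)` is exact. -/
def ExtHatVanishesAll (N : ModuleCat.{u} R) (T : ℤ → ModuleCat.{u} R)
    (dT : ∀ n : ℤ, T n →ₗ[R] T (n + 1)) : Prop :=
  ∀ n : ℤ, Function.Exact (fun g : N →ₗ[R] T n => (dT n).comp g)
    (fun g : N →ₗ[R] T (n + 1) => (dT (n + 1)).comp g)

/-! A module is Gorenstein injective relative to `𝒯` exactly when it is right `Ext`-orthogonal to
`𝒯` and is the quotient of an injective module by a relatively Gorenstein injective submodule. Being
the largest class with this property, these modules are closed under extensions and cokernels of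
monomorphisms as soon as `𝒯` contains the injective modules.

Call two modules linked if a third one surjects onto both with relatively Gorenstein injective
kernels. Linked modules are relatively Gorenstein injective simultaneously, and linkedness of `V`
and `V'`, witnessed by `X`, passes to the cokernels of `V → G` and `V' → G'`: embed `X` into
`E × G × G'`, with `E` an injective module containing `X`; the cokernel surjects onto both of them,
and by the snake lemma the kernels are quotients of relatively Gorenstein injective modules by such
modules. Starting from `M` linked to itself and moving along both coresolutions, the last terms are
linked. -/

universe v w

section IntChain

variable {α : Type*} {r : α → α → Prop} {P Q : α → Prop}

theorem exists_nat_chain (hP : ∀ a, P a → ∃ b, P b ∧ r a b) {a : α} (ha : P a) :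
    ∃ s : ℕ → α, s 0 = a ∧ (∀ n, P (s n)) ∧ ∀ n, r (s n) (s (n + 1)) := by
  choose next hnext hr using hP
  let step : {a // P a} → {a // P a} := fun a => ⟨next a a.2, hnext a a.2⟩
  refine ⟨fun n => (step^[n] ⟨a, ha⟩).1, rfl, fun n => (step^[n] ⟨a, ha⟩).2, fun n => ?_⟩
  simp only [Function.iterate_succ_apply']
  exact hr _ _

theorem exists_int_chain (hPQ : ∀ a, P a → Q a) (hP : ∀ a, P a → ∃ b, P b ∧ r b a)
    (hQ : ∀ a, Q a → ∃ b, Q b ∧ r a b) {a : α} (ha : P a) :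
    ∃ s : ℤ → α, s 0 = a ∧ (∀ n, Q (s n)) ∧ ∀ n, r (s n) (s (n + 1)) := by
  obtain ⟨x, hx₀, hxP, hx⟩ := exists_nat_chain (r := Function.swap r) hP ha
  obtain ⟨y, hy₀, hyQ, hy⟩ := exists_nat_chain hQ (hPQ a ha)
  let s : ℤ → α
    | .ofNat n => y n
    | .negSucc n => x (n + 1)
  have hsQ : ∀ n, Q (s n)
    | .ofNat n => hyQ n
    | .negSucc n => hPQ _ (hxP (n + 1))
  have hs : ∀ n, r (s n) (s (n + 1))
    | .ofNat n => hy n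
    | .negSucc 0 => show r (x 1) (y 0) from hy₀.trans hx₀.symm ▸ hx 0
    | .negSucc (n + 1) => hx (n + 1)
  exact ⟨s, hy₀, hsQ, hs⟩

end IntChain

theorem exact_comp_comp {A B C D E : Type*} [Zero D] [Zero E] {g : A → B} {f : B → C} {g' : C → D}
    {f' : D → E} (hg : Function.Surjective g) (hfg : Function.Exact f g')
    (hf' : Function.Injective f') (hf'₀ : f' 0 = 0) :
    Function.Exact (f ∘ g) (f' ∘ g') := fun y => by
  rw [hg.range_comp, ← hfg y, Function.comp_apply, ← hf'.eq_iff, hf'₀]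

section Ext

open Abelian

variable {C : Type u} [Category.{v} C] [Abelian C] [HasExt.{w} C] {S : ShortComplex C}
  (hS : S.ShortExact) {X : C} {n : ℕ}
include hS

theorem subsingleton_ext_X₂ (h₁ : Subsingleton (Ext X S.X₁ n)) (h₃ : Subsingleton (Ext X S.X₃ n)) :
    Subsingleton (Ext X S.X₂ n) := by
  refine subsingleton_of_forall_eq 0 fun x => ?_
  obtain ⟨y, rfl⟩ := Ext.covariant_sequence_exact₂ X hS x (Subsingleton.elim _ _)
  rw [Subsingleton.elim y 0, Ext.zero_comp]

theorem subsingleton_ext_X₃ (h₁ : Subsingleton (Ext X S.X₁ (n + 1)))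
    (h₂ : Subsingleton (Ext X S.X₂ n)) : Subsingleton (Ext X S.X₃ n) := by
  refine subsingleton_of_forall_eq 0 fun x => ?_
  obtain ⟨y, rfl⟩ := Ext.covariant_sequence_exact₃ X hS x rfl (Subsingleton.elim _ _)
  rw [Subsingleton.elim y 0, Ext.zero_comp]

theorem subsingleton_ext_X₁_succ (h₂ : Subsingleton (Ext X S.X₂ (n + 1)))
    (h₃ : Subsingleton (Ext X S.X₃ n)) : Subsingleton (Ext X S.X₁ (n + 1)) := by
  refine subsingleton_of_forall_eq 0 fun x => ?_
  obtain ⟨y, rfl⟩ := Ext.covariant_sequence_exact₁ X hS x (Subsingleton.elim _ _) rfl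
  rw [Subsingleton.elim y 0, Ext.zero_comp]

theorem exists_lift_of_subsingleton_ext_one (h₁ : Subsingleton (Ext X S.X₁ 1)) (φ : X ⟶ S.X₃) :
    ∃ ψ : X ⟶ S.X₂, ψ ≫ S.g = φ := by
  obtain ⟨y, hy⟩ := Ext.covariant_sequence_exact₃ X hS (Ext.mk₀ φ) (zero_add 1)
    (Subsingleton.elim _ _)
  obtain ⟨ψ, rfl⟩ := (Ext.mk₀_bijective _ _).2 y
  exact ⟨ψ, (Ext.mk₀_bijective _ _).1 (Ext.mk₀_comp_mk₀ ψ S.g ▸ hy)⟩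

theorem subsingleton_ext_one_X₁_of_exists_lift (h₂ : Subsingleton (Ext X S.X₂ 1))
    (hlift : ∀ φ : X ⟶ S.X₃, ∃ ψ : X ⟶ S.X₂, ψ ≫ S.g = φ) : Subsingleton (Ext X S.X₁ 1) := by
  refine subsingleton_of_forall_eq 0 fun x => ?_
  obtain ⟨y, rfl⟩ := Ext.covariant_sequence_exact₁ X hS x (Subsingleton.elim _ _) (zero_add 1)
  obtain ⟨φ, rfl⟩ := (Ext.mk₀_bijective _ _).2 y
  obtain ⟨ψ, rfl⟩ := hlift φ
  rw [← Ext.mk₀_comp_mk₀, Ext.comp_assoc_of_second_deg_zero, hS.comp_extClass, Ext.comp_zero]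

end Ext

section

variable {R}

section Modules

variable {A B C A' B' C' : Type*} [AddCommGroup A] [Module R A] [AddCommGroup B] [Module R B]
  [AddCommGroup C] [Module R C] [AddCommGroup A'] [Module R A'] [AddCommGroup B'] [Module R B']
  [AddCommGroup C'] [Module R C'] {f : A →ₗ[R] B} {g : B →ₗ[R] C}

theorem exact_comp_left (hf : Function.Injective f) (hfg : Function.Exact f g) (W : Type*)
    [AddCommGroup W] [Module R W] :
    Function.Exact (fun φ : W →ₗ[R] A => f ∘ₗ φ) fun φ : W →ₗ[R] B => g ∘ₗ φ := by
  refine fun φ => ⟨fun hφ => ?_, ?_⟩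
  · let e := LinearEquiv.ofInjective f hf
    let φ' := φ.codRestrict (LinearMap.range f) fun w => (hfg _).mp (LinearMap.congr_fun hφ w)
    exact ⟨e.symm ∘ₗ φ', LinearMap.ext fun w => congrArg Subtype.val (e.apply_symm_apply (φ' w))⟩
  · rintro ⟨ψ, rfl⟩
    exact LinearMap.ext fun w => hfg.apply_apply_eq_zero (ψ w)

variable {f' : A' →ₗ[R] B'} {g' : B' →ₗ[R] C'} {a : A →ₗ[R] A'} {b : B →ₗ[R] B'} {c : C →ₗ[R] C'}

theorem surjective_middle_of_exact (hg : Function.Surjective g) (hfg' : Function.Exact f' g')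
    (hbf : b ∘ₗ f = f' ∘ₗ a) (hcg : c ∘ₗ g = g' ∘ₗ b) (ha : Function.Surjective a)
    (hc : Function.Surjective c) : Function.Surjective b := by
  intro y
  obtain ⟨x, hx⟩ := (hc.comp hg) (g' y)
  have hyx : g' (y - b x) = 0 := by
    rw [map_sub, sub_eq_zero, ← hx]
    exact LinearMap.congr_fun hcg x
  obtain ⟨z, hz⟩ := (hfg' (y - b x)).mp hyx
  obtain ⟨t, rfl⟩ := ha z
  refine ⟨f t + x, ?_⟩
  rw [map_add, ← LinearMap.comp_apply, hbf, LinearMap.comp_apply, hz, sub_add_cancel]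

theorem ker_le_comap_ker (hbf : b ∘ₗ f = f' ∘ₗ a) :
    LinearMap.ker a ≤ (LinearMap.ker b).comap f := by
  rw [← LinearMap.ker_comp, hbf]
  exact LinearMap.ker_le_ker_comp a f'

end Modules

section Injective

theorem extVanish_succ_of_injective {E : ModuleCat.{u} R} (hE : Module.Injective R E) (n : ℕ)
    (N : ModuleCat.{u} R) : ExtVanish R (n + 1) N E := by
  have := (Module.injective_iff_injective_object R E).mp hE
  let P := ProjectiveResolution.of N
  have hP : (P.complex.sc' (n + 2) (n + 1) n).Exact :=
    (HomologicalComplex.exactAt_iff' _ _ _ _ (by simp) (by simp)).mp (P.complex_exactAt_succ n)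
  refine ModuleCat.subsingleton_of_isZero (Limits.IsZero.of_iso ?_ (P.isoExt (R := ℤ) (n + 1) E))
  rw [← HomologicalComplex.exactAt_iff_isZero_homology,
    HomologicalComplex.exactAt_iff' _ n (n + 1) (n + 2) (by simp) (by simp),
    ShortComplex.moduleCat_exact_iff]
  exact fun x hx => ⟨hP.descToInjective x hx, hP.comp_descToInjective x hx⟩

theorem weakInjective_of_injective {E : ModuleCat.{u} R} (hE : Module.Injective R E) :
    WeakInjective R E :=
  fun N _ => extVanish_succ_of_injective hE 0 N

theorem injective_of_subsingleton (E : Type u) [AddCommGroup E] [Module R E] [Subsingleton E] :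
    Module.Injective R E :=
  ⟨fun _ _ _ _ _ _ _ _ _ => ⟨0, fun _ => Subsingleton.elim _ _⟩⟩

theorem injective_prod {E F : Type u} [AddCommGroup E] [Module R E] [AddCommGroup F] [Module R F]
    (hE : Module.Injective R E) (hF : Module.Injective R F) : Module.Injective R (E × F) := by
  refine ⟨fun X Y _ _ _ _ i hi φ => ?_⟩
  obtain ⟨α, hα⟩ := hE.out i hi (LinearMap.fst R E F ∘ₗ φ)
  obtain ⟨β, hβ⟩ := hF.out i hi (LinearMap.snd R E F ∘ₗ φ)
  exact ⟨α.prod β, fun x => Prod.ext (hα x) (hβ x)⟩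

theorem exists_injective_embedding (M : ModuleCat.{u} R) :
    ∃ (E : ModuleCat.{u} R) (i : M →ₗ[R] E), Module.Injective R E ∧ Function.Injective i :=
  let ⟨⟨E, hE, i, hi⟩⟩ := EnoughInjectives.presentation M
  ⟨E, i.hom, (Module.injective_iff_injective_object R E).mpr hE,
    (ModuleCat.mono_iff_injective i).mp hi⟩

end Injective

section ShortExactSeq

variable {A B C A' B' C' : ModuleCat.{u} R} {f : A →ₗ[R] B} {g : B →ₗ[R] C}

theorem shortExactSeq_ker (hg : Function.Surjective g) :
    ShortExactSeq R (ModuleCat.of R (LinearMap.ker g)) B C (LinearMap.ker g).subtype g :=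
  ⟨Subtype.val_injective, hg, LinearMap.exact_subtype_ker_map g⟩

theorem shortExactSeq_quotient_range (hf : Function.Injective f) :
    ShortExactSeq R A B (ModuleCat.of R (B ⧸ LinearMap.range f)) f (LinearMap.range f).mkQ :=
  ⟨hf, Submodule.mkQ_surjective _, LinearMap.exact_map_mkQ_range f⟩

theorem shortExactSeq_rangeRestrict (hf : Function.Injective f) (hfg : Function.Exact f g) :
    ShortExactSeq R A B (ModuleCat.of R (LinearMap.range g)) f g.rangeRestrict :=
  ⟨hf, g.surjective_rangeRestrict, by
    rw [LinearMap.exact_iff, LinearMap.ker_rangeRestrict, hfg.linearMap_ker_eq]⟩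

theorem shortExactSeq_ker_ker (hfg : Function.Exact f g) :
    ShortExactSeq R (ModuleCat.of R (LinearMap.ker f)) A (ModuleCat.of R (LinearMap.ker g))
      (LinearMap.ker f).subtype
      (f.codRestrict (LinearMap.ker g)
        fun x => LinearMap.mem_ker.mpr (hfg.apply_apply_eq_zero x)) := by
  refine ⟨Subtype.val_injective, ?_, ?_⟩
  · rintro ⟨y, hy⟩
    obtain ⟨x, rfl⟩ := (hfg y).mp hy
    exact ⟨x, rfl⟩
  · rw [LinearMap.exact_iff, LinearMap.ker_codRestrict, Submodule.range_subtype]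

theorem shortExactSeq_ker_comp (hf : Function.Surjective f) :
    ShortExactSeq R (ModuleCat.of R (LinearMap.ker f)) (ModuleCat.of R (LinearMap.ker (g ∘ₗ f)))
      (ModuleCat.of R (LinearMap.ker g)) (Submodule.inclusion (LinearMap.ker_le_ker_comp f g))
      (f.restrict fun _ hx => hx) := by
  refine ⟨Submodule.inclusion_injective _, ?_, ?_⟩
  · rintro ⟨y, hy⟩
    obtain ⟨x, rfl⟩ := hf y
    exact ⟨⟨x, hy⟩, rfl⟩
  · rintro ⟨x, hx⟩
    exact ⟨fun h => ⟨⟨x, congrArg Subtype.val h⟩, rfl⟩,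
      fun ⟨y, hy⟩ => Subtype.ext ((congrArg (f ∘ Subtype.val) hy).symm.trans y.2)⟩

namespace ShortExactSeq

/-- The short complex underlying a short exact sequence of modules, giving access to the
categorical long exact sequences. -/
abbrev shortComplex (h : ShortExactSeq R A B C f g) : ShortComplex (ModuleCat.{u} R) :=
  .mk (ModuleCat.ofHom f) (ModuleCat.ofHom g) (ModuleCat.hom_ext h.2.2.linearMap_comp_eq_zero)

theorem shortExact (h : ShortExactSeq R A B C f g) : h.shortComplex.ShortExact :=
  ModuleCat.shortComplex_shortExact _ h.2.2 h.1 h.2.1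

variable {f' : A' →ₗ[R] B'} {g' : B' →ₗ[R] C'} {a : A →ₗ[R] A'} {b : B →ₗ[R] B'} {c : C →ₗ[R] C'}

theorem ker (h : ShortExactSeq R A B C f g) (hf' : Function.Injective f')
    (hfg' : Function.Exact f' g') (hbf : b ∘ₗ f = f' ∘ₗ a) (hcg : c ∘ₗ g = g' ∘ₗ b)
    (ha : Function.Surjective a) :
    ShortExactSeq R (ModuleCat.of R (LinearMap.ker a)) (ModuleCat.of R (LinearMap.ker b))
      (ModuleCat.of R (LinearMap.ker c)) (f.restrict (ker_le_comap_ker hbf))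
      (g.restrict (ker_le_comap_ker hcg)) := by
  refine ⟨fun x y hxy => Subtype.ext (h.1 (congrArg Subtype.val hxy)), ?_, ?_⟩
  · rintro ⟨z, hz⟩
    obtain ⟨y, rfl⟩ := h.2.1 z
    obtain ⟨x', hx'⟩ := (hfg' (b y)).mp ((LinearMap.congr_fun hcg y).symm.trans hz)
    obtain ⟨x, rfl⟩ := ha x'
    have hbfx : b (f x) = b y := (LinearMap.congr_fun hbf x).trans hx'
    refine ⟨⟨y - f x, by rw [LinearMap.mem_ker, map_sub, hbfx, sub_self]⟩, Subtype.ext ?_⟩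
    change g (y - f x) = g y
    rw [map_sub, h.2.2.apply_apply_eq_zero, sub_zero]
  · rintro ⟨y, hy⟩
    constructor
    · intro hgy
      obtain ⟨x, rfl⟩ := (h.2.2 y).mp (congrArg Subtype.val hgy)
      have hax : f' (a x) = f' 0 := by
        rw [map_zero]
        exact (LinearMap.congr_fun hbf x).symm.trans hy
      exact ⟨⟨x, hf' hax⟩, rfl⟩
    · rintro ⟨x, hx⟩
      rw [← hx]
      exact Subtype.ext (h.2.2.apply_apply_eq_zero x.1)

end ShortExactSeq

end ShortExactSeq

/-- `M` lies in the right `Ext`-orthogonal of the class `𝒯`: all groups `Ext^i_R(W, M)` with `W` in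
`𝒯` and `i ≥ 1` vanish. -/
def RightExtOrthogonal (𝒯 : ModuleCat.{u} R → Prop) (M : ModuleCat.{u} R) : Prop :=
  ∀ W : ModuleCat.{u} R, 𝒯 W → ∀ n : ℕ, Subsingleton (Abelian.Ext.{u} W M (n + 1))

/-- `C` is a first cosyzygy of `K`: the cokernel of an embedding of `K` into an injective module. -/
def IsInjectiveCosyzygy (K C : ModuleCat.{u} R) : Prop :=
  ∃ (E : ModuleCat.{u} R) (f : K →ₗ[R] E) (g : E →ₗ[R] C),
    Module.Injective R E ∧ ShortExactSeq R K E C f g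

variable {𝒯 : ModuleCat.{u} R → Prop}
  (h𝒯 : ∀ E : ModuleCat.{u} R, Module.Injective R E → 𝒯 E)

namespace RightExtOrthogonal

variable {A B C : ModuleCat.{u} R} {f : A →ₗ[R] B} {g : B →ₗ[R] C}

theorem of_injective {E : ModuleCat.{u} R} (hE : Module.Injective R E) :
    RightExtOrthogonal 𝒯 E := fun W _ n =>
  have := (Module.injective_iff_injective_object R E).mp hE
  Abelian.Ext.subsingleton_of_injective W E n

theorem middle (h : ShortExactSeq R A B C f g) (hA : RightExtOrthogonal 𝒯 A)
    (hC : RightExtOrthogonal 𝒯 C) : RightExtOrthogonal 𝒯 B := fun W hW n =>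
  subsingleton_ext_X₂ h.shortExact (hA W hW n) (hC W hW n)

theorem right (h : ShortExactSeq R A B C f g) (hA : RightExtOrthogonal 𝒯 A)
    (hB : RightExtOrthogonal 𝒯 B) : RightExtOrthogonal 𝒯 C := fun W hW n =>
  subsingleton_ext_X₃ h.shortExact (hA W hW (n + 1)) (hB W hW n)

theorem cosyzygy (hA : RightExtOrthogonal 𝒯 A) (h : IsInjectiveCosyzygy A C) :
    RightExtOrthogonal 𝒯 C :=
  let ⟨_, _, _, hE, hACE⟩ := h
  hA.right hACE (of_injective hE)

theorem surjective_comp_left (h : ShortExactSeq R A B C f g) (hA : RightExtOrthogonal 𝒯 A)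
    {W : ModuleCat.{u} R} (hW : 𝒯 W) :
    Function.Surjective fun φ : W →ₗ[R] B => g ∘ₗ φ := fun φ =>
  let ⟨ψ, hψ⟩ := exists_lift_of_subsingleton_ext_one h.shortExact (hA W hW 0) (ModuleCat.ofHom φ)
  ⟨ψ.hom, congrArg ModuleCat.Hom.hom hψ⟩

end RightExtOrthogonal

theorem exists_isInjectiveCosyzygy (M : ModuleCat.{u} R) :
    ∃ C : ModuleCat.{u} R, IsInjectiveCosyzygy M C :=
  let ⟨E, i, hE, hi⟩ := exists_injective_embedding M
  ⟨_, E, i, _, hE, shortExactSeq_quotient_range hi⟩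

namespace IsTotallyAcyclicInjComplex

variable {I : ℤ → ModuleCat.{u} R} {d : ∀ n : ℤ, I n →ₗ[R] I (n + 1)}

theorem rightExtOrthogonal_ker (hI : IsTotallyAcyclicInjComplex R 𝒯 I d) (n : ℤ) :
    RightExtOrthogonal 𝒯 (ModuleCat.of R (LinearMap.ker (d n))) := by
  obtain ⟨hinj, hd, hhom⟩ := hI
  intro W hW i
  have hIext (n : ℤ) (j : ℕ) : Subsingleton (Abelian.Ext.{u} W (I n) (j + 1)) :=
    RightExtOrthogonal.of_injective (hinj n) W hW j
  have hses (n : ℤ) := (shortExactSeq_ker_ker (hd n)).shortExact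
  induction i generalizing n with
  | zero =>
    refine subsingleton_ext_one_X₁_of_exists_lift (hses n) (hIext n 0) fun φ => ?_
    obtain ⟨ψ, hψ⟩ := (hhom W hW n ((LinearMap.ker (d (n + 1))).subtype ∘ₗ φ.hom)).mp
      (LinearMap.ext fun w => (φ.hom w).2)
    exact ⟨ModuleCat.ofHom ψ,
      ModuleCat.hom_ext (LinearMap.ext fun w => Subtype.ext (LinearMap.congr_fun hψ w))⟩
  | succ i ih =>
    exact subsingleton_ext_X₁_succ (hses n) (hIext n (i + 1)) (ih (n + 1))

end IsTotallyAcyclicInjComplex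

namespace GorensteinRelInjective

theorem of_linearEquiv {A B : ModuleCat.{u} R} (e : A ≃ₗ[R] B)
    (hA : GorensteinRelInjective R 𝒯 A) : GorensteinRelInjective R 𝒯 B := by
  obtain ⟨I, d, π, hI, hπ, hdπ⟩ := hA
  exact ⟨I, d, e ∘ₗ π, hI, e.surjective.comp hπ, e.injective.comp_exact_iff_exact.mpr hdπ⟩

theorem of_cosyzygy_chain {Z : ℤ → ModuleCat.{u} R} (hZ : ∀ n, RightExtOrthogonal 𝒯 (Z n))
    (h : ∀ n, IsInjectiveCosyzygy (Z n) (Z (n + 1))) : GorensteinRelInjective R 𝒯 (Z 1) := by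
  choose I f g hI h using h
  refine ⟨I, fun n => f (n + 1) ∘ₗ g n, g 0, ⟨hI, fun n => ?_, fun W hW n => ?_⟩, (h 0).2.1, ?_⟩
  · simp only [LinearMap.coe_comp]
    exact exact_comp_comp (h n).2.1 (h (n + 1)).2.2 (h (n + 1 + 1)).1 (map_zero _)
  · exact exact_comp_comp ((hZ n).surjective_comp_left (h n) hW)
      (exact_comp_left (h (n + 1)).1 (h (n + 1)).2.2 W)
      (fun _ _ => (LinearMap.cancel_left (h (n + 1 + 1)).1).mp) (LinearMap.comp_zero _)
  · rw [LinearMap.coe_comp]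
    exact exact_comp_comp (f := f 0) (f' := id) (h (-1)).2.1 (h 0).2.2 Function.injective_id rfl

theorem coinduction {S : ModuleCat.{u} R → Prop} (hS : ∀ M, S M → RightExtOrthogonal 𝒯 M)
    (hcover : ∀ M, S M → ∃ (E : ModuleCat.{u} R) (g : E →ₗ[R] M), Module.Injective R E ∧
      Function.Surjective g ∧ S (ModuleCat.of R (LinearMap.ker g)))
    {M : ModuleCat.{u} R} (hM : S M) : GorensteinRelInjective R 𝒯 M := by
  have hleft (M) (hM : S M) : ∃ K, S K ∧ IsInjectiveCosyzygy K M :=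
    let ⟨E, g, hE, hg, hK⟩ := hcover M hM
    ⟨_, hK, E, _, g, hE, shortExactSeq_ker hg⟩
  have hright (M) (hM : RightExtOrthogonal 𝒯 M) :
      ∃ C, RightExtOrthogonal 𝒯 C ∧ IsInjectiveCosyzygy M C :=
    let ⟨C, hC⟩ := exists_isInjectiveCosyzygy M
    ⟨C, hM.cosyzygy hC, hC⟩
  obtain ⟨Z, rfl, hZ, h⟩ := exists_int_chain hS hleft hright hM
  exact of_cosyzygy_chain (Z := fun n => Z (n - 1)) (fun n => hZ (n - 1)) fun n => by
    simpa only [sub_add_cancel, add_sub_cancel_right] using h (n - 1)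

end GorensteinRelInjective

theorem IsTotallyAcyclicInjComplex.gorensteinRelInjective_ker {I : ℤ → ModuleCat.{u} R}
    {d : ∀ n : ℤ, I n →ₗ[R] I (n + 1)} (hI : IsTotallyAcyclicInjComplex R 𝒯 I d) (n : ℤ) :
    GorensteinRelInjective R 𝒯 (ModuleCat.of R (LinearMap.ker (d n))) := by
  refine GorensteinRelInjective.coinduction
    (S := fun X => ∃ n, X = ModuleCat.of R (LinearMap.ker (d n))) ?_ ?_ ⟨n, rfl⟩
  · rintro _ ⟨n, rfl⟩
    exact hI.rightExtOrthogonal_ker n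
  · rintro _ ⟨n, rfl⟩
    obtain ⟨m, rfl⟩ : ∃ m, n = m + 1 := ⟨n - 1, (sub_add_cancel n 1).symm⟩
    exact ⟨I m, _, hI.1 m, (shortExactSeq_ker_ker (hI.2.1 m)).2.1, m, by
      rw [LinearMap.ker_codRestrict]⟩

/-- A surjective linear map whose kernel is Gorenstein injective relative to `𝒯`. -/
structure GorensteinRelEpi (𝒯 : ModuleCat.{u} R → Prop) {X Y : ModuleCat.{u} R}
    (g : X →ₗ[R] Y) : Prop where
  surjective : Function.Surjective g
  ker : GorensteinRelInjective R 𝒯 (ModuleCat.of R (LinearMap.ker g))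

namespace GorensteinRelInjective

theorem rightExtOrthogonal_and_exists_cover {M : ModuleCat.{u} R}
    (hM : GorensteinRelInjective R 𝒯 M) :
    RightExtOrthogonal 𝒯 M ∧ ∃ (E : ModuleCat.{u} R) (g : E →ₗ[R] M),
      Module.Injective R E ∧ GorensteinRelEpi 𝒯 g := by
  obtain ⟨I, d, π, hI, hπ, hdπ⟩ := hM
  have hker : LinearMap.ker π = LinearMap.ker (d 0) :=
    hdπ.linearMap_ker_eq.trans (hI.2.1 (-1)).linearMap_ker_eq.symm
  have horth : RightExtOrthogonal 𝒯 (ModuleCat.of R (LinearMap.ker π)) :=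
    hker ▸ hI.rightExtOrthogonal_ker 0
  exact ⟨horth.right (shortExactSeq_ker hπ) (.of_injective (hI.1 0)), I 0, π, hI.1 0, hπ,
    hker ▸ hI.gorensteinRelInjective_ker 0⟩

theorem rightExtOrthogonal {M : ModuleCat.{u} R} (hM : GorensteinRelInjective R 𝒯 M) :
    RightExtOrthogonal 𝒯 M :=
  hM.rightExtOrthogonal_and_exists_cover.1

theorem exists_cover {M : ModuleCat.{u} R} (hM : GorensteinRelInjective R 𝒯 M) :
    ∃ (E : ModuleCat.{u} R) (g : E →ₗ[R] M), Module.Injective R E ∧ GorensteinRelEpi 𝒯 g :=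
  hM.rightExtOrthogonal_and_exists_cover.2

theorem of_cover {M E : ModuleCat.{u} R} {g : E →ₗ[R] M} (hM : RightExtOrthogonal 𝒯 M)
    (hE : Module.Injective R E) (hg : GorensteinRelEpi 𝒯 g) : GorensteinRelInjective R 𝒯 M :=
  coinduction
    (S := fun M => RightExtOrthogonal 𝒯 M ∧ ∃ (E : ModuleCat.{u} R) (g : E →ₗ[R] M),
      Module.Injective R E ∧ GorensteinRelEpi 𝒯 g)
    (fun _ h => h.1)
    (fun _ ⟨_, E, g, hE, hg⟩ =>
      ⟨E, g, hE, hg.surjective, hg.ker.rightExtOrthogonal_and_exists_cover⟩)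
    ⟨hM, E, g, hE, hg⟩

theorem of_injective {E : ModuleCat.{u} R} (hE : Module.Injective R E) :
    GorensteinRelInjective R 𝒯 E := by
  refine coinduction (S := fun E => Module.Injective R E) (fun _ => .of_injective)
    (fun E hE => ⟨E, .id, hE, Function.surjective_id, ?_⟩) hE
  rw [LinearMap.ker_id]
  exact injective_of_subsingleton _

include h𝒯 in
theorem extension {A B C : ModuleCat.{u} R} {f : A →ₗ[R] B} {g : B →ₗ[R] C}
    (h : ShortExactSeq R A B C f g) (hA : GorensteinRelInjective R 𝒯 A)
    (hC : GorensteinRelInjective R 𝒯 C) : GorensteinRelInjective R 𝒯 B := by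
  refine coinduction
    (S := fun B => ∃ (A C : ModuleCat.{u} R) (f : A →ₗ[R] B) (g : B →ₗ[R] C),
      ShortExactSeq R A B C f g ∧ GorensteinRelInjective R 𝒯 A ∧ GorensteinRelInjective R 𝒯 C)
    ?_ ?_ ⟨A, C, f, g, h, hA, hC⟩
  · rintro B ⟨A, C, f, g, h, hA, hC⟩
    exact hA.rightExtOrthogonal.middle h hC.rightExtOrthogonal
  · rintro B ⟨A, C, f, g, h, hA, hC⟩
    obtain ⟨E, p, hE, hp⟩ := hA.exists_cover
    obtain ⟨F, q, hF, hq⟩ := hC.exists_cover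
    -- Horseshoe lemma: the covers `p` and `q` combine to the cover `σ`.
    obtain ⟨s, hs : g ∘ₗ s = q⟩ := hA.rightExtOrthogonal.surjective_comp_left h (h𝒯 F hF) q
    let σ : ModuleCat.of R (E × F) →ₗ[R] B := (f ∘ₗ p).coprod s
    have hEF : ShortExactSeq R E (ModuleCat.of R (E × F)) F (.inl R E F) (.snd R E F) :=
      ⟨LinearMap.inl_injective, LinearMap.snd_surjective, .inl_snd⟩
    have hinl : σ ∘ₗ .inl R E F = f ∘ₗ p := LinearMap.coprod_inl _ _
    have hsnd : q ∘ₗ .snd R E F = g ∘ₗ σ := by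
      rw [LinearMap.comp_coprod, ← LinearMap.comp_assoc, h.2.2.linearMap_comp_eq_zero, hs,
        LinearMap.zero_comp, LinearMap.coprod_zero_left]
    exact ⟨_, σ, injective_prod hE hF,
      surjective_middle_of_exact hEF.2.1 h.2.2 hinl hsnd hp.surjective hq.surjective,
      _, _, _, _, hEF.ker h.1 h.2.2 hinl hsnd hp.surjective, hp.ker, hq.ker⟩

end GorensteinRelInjective

namespace GorensteinRelEpi

variable {X Y Z : ModuleCat.{u} R} {f : X →ₗ[R] Y} {g : Y →ₗ[R] Z}

theorem of_shortExactSeq (h : ShortExactSeq R X Y Z f g) (hX : GorensteinRelInjective R 𝒯 X) :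
    GorensteinRelEpi 𝒯 g :=
  let e := (LinearEquiv.ofInjective f h.1).trans (.ofEq _ _ h.2.2.linearMap_ker_eq.symm)
  ⟨h.2.1, hX.of_linearEquiv e⟩

theorem of_bijective (hf : Function.Bijective f) : GorensteinRelEpi 𝒯 f := by
  refine ⟨hf.2, .of_injective ?_⟩
  rw [LinearMap.ker_eq_bot.mpr hf.1]
  exact injective_of_subsingleton _

theorem fst (hY : GorensteinRelInjective R 𝒯 Y) :
    GorensteinRelEpi 𝒯 (X := ModuleCat.of R (X × Y)) (LinearMap.fst R X Y) :=
  of_shortExactSeq (f := LinearMap.inr R X Y)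
    ⟨LinearMap.inr_injective, LinearMap.fst_surjective, .inr_fst⟩ hY

theorem snd (hX : GorensteinRelInjective R 𝒯 X) :
    GorensteinRelEpi 𝒯 (X := ModuleCat.of R (X × Y)) (LinearMap.snd R X Y) :=
  of_shortExactSeq (f := LinearMap.inl R X Y)
    ⟨LinearMap.inl_injective, LinearMap.snd_surjective, .inl_snd⟩ hX

include h𝒯 in
theorem comp (hg : GorensteinRelEpi 𝒯 g) (hf : GorensteinRelEpi 𝒯 f) :
    GorensteinRelEpi 𝒯 (g ∘ₗ f) :=
  ⟨hg.surjective.comp hf.surjective,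
    .extension h𝒯 (shortExactSeq_ker_comp hf.surjective) hf.ker hg.ker⟩

include h𝒯 in
theorem gorensteinRelInjective_iff (hg : GorensteinRelEpi 𝒯 g) :
    GorensteinRelInjective R 𝒯 Y ↔ GorensteinRelInjective R 𝒯 Z := by
  have hses := shortExactSeq_ker hg.surjective
  refine ⟨fun hY => ?_, .extension h𝒯 hses hg.ker⟩
  obtain ⟨E, p, hE, hp⟩ := hY.exists_cover
  exact .of_cover (hg.ker.rightExtOrthogonal.right hses hY.rightExtOrthogonal) hE (hg.comp h𝒯 hp)

include h𝒯 in
theorem exists_cokernel_map {X H V G C : ModuleCat.{u} R} {i : X →ₗ[R] H} {g : X →ₗ[R] V}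
    {p : H →ₗ[R] G} {j : V →ₗ[R] G} {k : G →ₗ[R] C}
    (hg : GorensteinRelEpi 𝒯 g) (hp : GorensteinRelEpi 𝒯 p) (hi : Function.Injective i)
    (hjk : ShortExactSeq R V G C j k) (hcomm : p ∘ₗ i = j ∘ₗ g) :
    ∃ q : ModuleCat.of R (H ⧸ LinearMap.range i) →ₗ[R] C, GorensteinRelEpi 𝒯 q := by
  have hle : LinearMap.range i ≤ LinearMap.ker (k ∘ₗ p) := by
    rw [LinearMap.range_le_ker_iff, LinearMap.comp_assoc, hcomm, ← LinearMap.comp_assoc,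
      hjk.2.2.linearMap_comp_eq_zero, LinearMap.zero_comp]
  let q : ModuleCat.of R (H ⧸ LinearMap.range i) →ₗ[R] C := (LinearMap.range i).liftQ (k ∘ₗ p) hle
  have hq : q ∘ₗ (LinearMap.range i).mkQ = k ∘ₗ p := Submodule.liftQ_mkQ _ _ hle
  have hqsurj : Function.Surjective q :=
    Function.Surjective.of_comp (g := (LinearMap.range i).mkQ) (hjk.2.1.comp hp.surjective)
  have hker := (shortExactSeq_quotient_range hi).ker hjk.1 hjk.2.2 hcomm hq hg.surjective
  exact ⟨q, hqsurj,
    ((of_shortExactSeq hker hg.ker).gorensteinRelInjective_iff h𝒯).mp hp.ker⟩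

end GorensteinRelEpi

/-- Two modules are linked if some module surjects onto both of them with kernels that are
Gorenstein injective relative to `𝒯`; linked modules are relatively Gorenstein injective
simultaneously. -/
def GorensteinRelLinked (𝒯 : ModuleCat.{u} R → Prop) (V V' : ModuleCat.{u} R) : Prop :=
  ∃ (X : ModuleCat.{u} R) (g : X →ₗ[R] V) (g' : X →ₗ[R] V'),
    GorensteinRelEpi 𝒯 g ∧ GorensteinRelEpi 𝒯 g'

namespace GorensteinRelLinked

theorem refl (V : ModuleCat.{u} R) : GorensteinRelLinked 𝒯 V V :=
  ⟨V, .id, .id, .of_bijective Function.bijective_id, .of_bijective Function.bijective_id⟩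

variable {V V' : ModuleCat.{u} R}

include h𝒯 in
theorem gorensteinRelInjective_iff (h : GorensteinRelLinked 𝒯 V V') :
    GorensteinRelInjective R 𝒯 V ↔ GorensteinRelInjective R 𝒯 V' :=
  let ⟨_, _, _, hg, hg'⟩ := h
  (hg.gorensteinRelInjective_iff h𝒯).symm.trans (hg'.gorensteinRelInjective_iff h𝒯)

include h𝒯 in
theorem cokernel {G G' C C' : ModuleCat.{u} R} {j : V →ₗ[R] G} {k : G →ₗ[R] C}
    {j' : V' →ₗ[R] G'} {k' : G' →ₗ[R] C'} (h : GorensteinRelLinked 𝒯 V V')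
    (hjk : ShortExactSeq R V G C j k) (hjk' : ShortExactSeq R V' G' C' j' k')
    (hG : GorensteinRelInjective R 𝒯 G) (hG' : GorensteinRelInjective R 𝒯 G') :
    GorensteinRelLinked 𝒯 C C' := by
  obtain ⟨X, g, g', hg, hg'⟩ := h
  obtain ⟨E, e, hE, he⟩ := exists_injective_embedding X
  let H := ModuleCat.of R (E × G × G')
  let i : X →ₗ[R] H := e.prod ((j ∘ₗ g).prod (j' ∘ₗ g'))
  have hi : Function.Injective i := fun x y hxy => he (congrArg Prod.fst hxy)
  have hsnd : GorensteinRelEpi 𝒯 (X := H) (Y := ModuleCat.of R (G × G')) (.snd R E (G × G')) :=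
    .snd (.of_injective hE)
  obtain ⟨q, hq⟩ := hg.exists_cokernel_map h𝒯 ((GorensteinRelEpi.fst hG').comp h𝒯 hsnd) hi hjk rfl
  obtain ⟨q', hq'⟩ :=
    hg'.exists_cokernel_map h𝒯 ((GorensteinRelEpi.snd hG).comp h𝒯 hsnd) hi hjk' rfl
  exact ⟨_, q, q', hq, hq'⟩

end GorensteinRelLinked

namespace IsFiniteCoresolution

variable {M M' : ModuleCat.{u} R} {n : ℕ} {G G' : ℕ → ModuleCat.{u} R}
  {d : ∀ i, G i →ₗ[R] G (i + 1)} {d' : ∀ i, G' i →ₗ[R] G' (i + 1)} {ε : M →ₗ[R] G 0}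
  {ε' : M' →ₗ[R] G' 0}

theorem bijective_of_length_zero (h : IsFiniteCoresolution R M 0 G d ε) : Function.Bijective ε :=
  ⟨h.1, fun x => (h.2.1 x).mp (h.2.2.2 1 one_pos _)⟩

theorem gorensteinRelInjective_iff_of_length_zero (h : IsFiniteCoresolution R M 0 G d ε) :
    GorensteinRelInjective R 𝒯 M ↔ GorensteinRelInjective R 𝒯 (G 0) :=
  let e := LinearEquiv.ofBijective ε h.bijective_of_length_zero
  ⟨.of_linearEquiv e, .of_linearEquiv e.symm⟩

theorem range (h : IsFiniteCoresolution R M (n + 1) G d ε) :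
    IsFiniteCoresolution R (ModuleCat.of R (LinearMap.range (d 0))) n (fun i => G (i + 1))
      (fun i => d (i + 1)) (LinearMap.range (d 0)).subtype := by
  obtain ⟨-, -, hd, hG⟩ := h
  refine ⟨Subtype.val_injective, ?_, fun i => hd (i + 1), fun i hi => hG (i + 1) (by lia)⟩
  rw [LinearMap.exact_iff, Submodule.range_subtype, (hd 0).linearMap_ker_eq]

include h𝒯 in
theorem gorensteinRelInjective_iff_of_linked (hM : GorensteinRelLinked 𝒯 M M')
    (h : IsFiniteCoresolution R M n G d ε) (hG : ∀ i < n, GorensteinRelInjective R 𝒯 (G i))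
    (h' : IsFiniteCoresolution R M' n G' d' ε')
    (hG' : ∀ i < n, GorensteinRelInjective R 𝒯 (G' i)) :
    GorensteinRelInjective R 𝒯 (G n) ↔ GorensteinRelInjective R 𝒯 (G' n) := by
  induction n generalizing M M' G G' with
  | zero =>
    rw [← h.gorensteinRelInjective_iff_of_length_zero,
      ← h'.gorensteinRelInjective_iff_of_length_zero]
    exact hM.gorensteinRelInjective_iff h𝒯
  | succ n ih =>
    have hrange := hM.cokernel h𝒯 (shortExactSeq_rangeRestrict h.1 h.2.1)
      (shortExactSeq_rangeRestrict h'.1 h'.2.1) (hG 0 n.succ_pos) (hG' 0 n.succ_pos)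
    exact ih hrange h.range (fun i hi => hG (i + 1) (by lia)) h'.range
      (fun i hi => hG' (i + 1) (by lia))

end IsFiniteCoresolution

theorem gorensteinWeakInjective_cosyzygy_iff_general
    (h𝒯 : ∀ E : ModuleCat.{u} R, Module.Injective R E → 𝒯 E) (M : ModuleCat.{u} R) (n : ℕ)
    (G : ℕ → ModuleCat.{u} R) (d : ∀ i, G i →ₗ[R] G (i + 1)) (ε : M →ₗ[R] G 0)
    (hG : IsFiniteCoresolution R M n G d ε)
    (hGgri : ∀ i < n, GorensteinRelInjective R 𝒯 (G i))
    (G' : ℕ → ModuleCat.{u} R) (d' : ∀ i, G' i →ₗ[R] G' (i + 1)) (ε' : M →ₗ[R] G' 0)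
    (hG' : IsFiniteCoresolution R M n G' d' ε')
    (hG'gri : ∀ i < n, GorensteinRelInjective R 𝒯 (G' i)) :
    GorensteinRelInjective R 𝒯 (G n) ↔ GorensteinRelInjective R 𝒯 (G' n) :=
  hG.gorensteinRelInjective_iff_of_linked h𝒯 (.refl M) hGgri hG' hG'gri

end

/-- If `0 → M → G^0 → ⋯ → G^{n-1} → V^n → 0` and `0 → M → Ḡ^0 → ⋯ → Ḡ^{n-1} → V̄^n → 0`
are exact with all `G^i`, `Ḡ^i` Gorenstein weak injective, then `V^n` is Gorenstein weak
injective iff `V̄^n` is. -/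
theorem gorensteinWeakInjective_cosyzygy_iff (M : ModuleCat.{u} R) (n : ℕ)
    (G : ℕ → ModuleCat.{u} R) (d : ∀ i, G i →ₗ[R] G (i + 1)) (ε : M →ₗ[R] G 0)
    (hG : IsFiniteCoresolution R M n G d ε)
    (hGgwi : ∀ i < n, GorensteinWeakInjective R (G i))
    (G' : ℕ → ModuleCat.{u} R) (d' : ∀ i, G' i →ₗ[R] G' (i + 1)) (ε' : M →ₗ[R] G' 0)
    (hG' : IsFiniteCoresolution R M n G' d' ε')
    (hG'gwi : ∀ i < n, GorensteinWeakInjective R (G' i)) :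
    GorensteinWeakInjective R (G n) ↔ GorensteinWeakInjective R (G' n) :=
  gorensteinWeakInjective_cosyzygy_iff_general (fun _ => weakInjective_of_injective) M n G d ε hG
    hGgwi G' d' ε' hG' hG'gwi
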